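/- arXiv:2504.12776 — 2 statements merged into one kernel-verified Lean document; each statement's English description precedes it below -/
import Mathlib

section
/- For every sequence Λ = (λ_1, …, λ_n) of permutations of {1,…,m}, the total wiggle of Λ is at most twice the total crossing number of Λ; that is, Σ_{k=1}^{n−1} Σ_{i=1}^{m} |λ_{k+1}(i) − λ_k(i)| ≤ 2 · (total crossing number of Λ). (This is the direction of the paper's claim that the combinatorial wiggle is controlled by the number of crossings, so that minimizing crossings suffices.) -/
open Finset

/-- `Compatible b L` : the layout `L` respects the bin assignment `b`. -/
def Compatible {m n : ℕ} (b : Fin m → Fin n → ℕ) (L : Fin n → Equiv.Perm (Fin m)) : Prop :=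
  ∀ i j : Fin m, ∀ k : Fin n, b i k < b j k → L k i < L k j

/-- Curves `i` and `j` cross between elements `k` and `k+1`. -/
def CrossAt {m n : ℕ} (L : Fin n → Equiv.Perm (Fin m)) (i j : Fin m) (k : Fin n) : Prop :=
  ∃ h : (k : ℕ) + 1 < n,
    (L k i < L k j ∧ L ⟨(k : ℕ) + 1, h⟩ j < L ⟨(k : ℕ) + 1, h⟩ i) ∨
    (L k j < L k i ∧ L ⟨(k : ℕ) + 1, h⟩ i < L ⟨(k : ℕ) + 1, h⟩ j)

instance {m n : ℕ} (L : Fin n → Equiv.Perm (Fin m)) (i j : Fin m) :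
    DecidablePred (CrossAt L i j) := fun k => by unfold CrossAt; infer_instance

/-- Number of crossings of curves `i` and `j` in layout `L`. -/
def crossCount {m n : ℕ} (L : Fin n → Equiv.Perm (Fin m)) (i j : Fin m) : ℕ :=
  (univ.filter (CrossAt L i j)).card

/-- Alternation pairs of curves `i` and `j` under bin assignment `b`. -/
def AltPair {m n : ℕ} (b : Fin m → Fin n → ℕ) (i j : Fin m) (p : Fin n × Fin n) : Prop :=
  p.1 < p.2 ∧ (∀ t : Fin n, p.1 < t → t < p.2 → b i t = b j t) ∧
    ((b i p.1 < b j p.1 ∧ b j p.2 < b i p.2) ∨ (b j p.1 < b i p.1 ∧ b i p.2 < b j p.2))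

instance {m n : ℕ} (b : Fin m → Fin n → ℕ) (i j : Fin m) :
    DecidablePred (AltPair b i j) := fun p => by unfold AltPair; infer_instance

/-- Alternation number of curves `i` and `j`. -/
def altCount {m n : ℕ} (b : Fin m → Fin n → ℕ) (i j : Fin m) : ℕ :=
  (univ.filter (AltPair b i j)).card

/-- Total crossing number of layout `L` (sum over unordered pairs of curves). -/
def totalCross {m n : ℕ} (L : Fin n → Equiv.Perm (Fin m)) : ℕ :=
  ∑ p ∈ univ.filter (fun p : Fin m × Fin m => p.1 < p.2), crossCount L p.1 p.2

/-- Total wiggle of layout `L`. -/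
def totalWiggle {m n : ℕ} (L : Fin n → Equiv.Perm (Fin m)) : ℤ :=
  ∑ k : Fin n, ∑ i : Fin m,
    if h : (k : ℕ) + 1 < n then
      |((L ⟨(k : ℕ) + 1, h⟩ i : ℕ) : ℤ) - ((L k i : ℕ) : ℤ)| else 0

/-!
The position of a curve counts the curves below it. A curve therefore moves between two consecutive
elements by at most the number of curves that change sides with respect to it, i.e. that cross it.
Summing over all curves counts every crossing twice, once for each of the two curves involved.
-/

theorem abs_card_sub_card_le_card_symmDiff {α : Type*} [DecidableEq α] (s t : Finset α) :
    |(#s : ℤ) - #t| ≤ #(symmDiff s t) := by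
  have card_eq : #(symmDiff s t) = #(s \ t) + #(t \ s) :=
    card_union_of_disjoint disjoint_sdiff_sdiff
  have hs : #s ≤ #(s \ t) + #t := card_le_card_sdiff_add_card
  have ht : #t ≤ #(t \ s) + #s := card_le_card_sdiff_add_card
  rw [abs_le]
  omega

theorem sum_sum_eq_two_nsmul_sum_lt {ι M : Type*} [LinearOrder ι] [AddCommMonoid M]
    (s : Finset ι) {f : ι → ι → M} (hsymm : ∀ i j, f i j = f j i) (hdiag : ∀ i, f i i = 0) :
    ∑ i ∈ s, ∑ j ∈ s, f i j = 2 • ∑ p ∈ s ×ˢ s with p.1 < p.2, f p.1 p.2 := by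
  have sum_not_lt : ∑ p ∈ s ×ˢ s with ¬ p.1 < p.2, f p.1 p.2
      = ∑ p ∈ s ×ˢ s with p.2 < p.1, f p.1 p.2 := by
    symm
    refine sum_subset (fun p => by grind) fun p hp hp' => ?_
    have diag : p.1 = p.2 := by grind
    rw [diag, hdiag]
  have sum_gt : ∑ p ∈ s ×ˢ s with p.2 < p.1, f p.1 p.2
      = ∑ p ∈ s ×ˢ s with p.1 < p.2, f p.1 p.2 :=
    sum_nbij' Prod.swap Prod.swap (by grind) (by grind) (by simp) (by simp)
      fun p _ => hsymm p.1 p.2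
  rw [← sum_product', ← sum_filter_add_sum_filter_not _ (fun p : ι × ι => p.1 < p.2),
    sum_not_lt, sum_gt, two_nsmul]

section Position

variable {α : Type*} [Fintype α] {m : ℕ}

theorem card_filter_apply_lt_apply (σ : α ≃ Fin m) (i : α) : #{j | σ j < σ i} = (σ i : ℕ) := by
  rw [← Fin.card_Iio (σ i)]
  exact card_equiv σ (by simp)

theorem abs_apply_sub_apply_le_card_inversions (σ τ : α ≃ Fin m) (i : α) :
    |((τ i : ℕ) : ℤ) - ((σ i : ℕ) : ℤ)|
      ≤ #{j | (σ i < σ j ∧ τ j < τ i) ∨ (σ j < σ i ∧ τ i < τ j)} := by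
  classical
  rw [← card_filter_apply_lt_apply τ, ← card_filter_apply_lt_apply σ]
  refine (abs_card_sub_card_le_card_symmDiff _ _).trans (mod_cast card_le_card fun j hj => ?_)
  have lt_of_not_lt {ρ : α ≃ Fin m} (hne : j ≠ i) (hnot : ¬ ρ j < ρ i) : ρ i < ρ j :=
    (not_lt.mp hnot).lt_of_ne' (ρ.injective.ne hne)
  simp only [mem_symmDiff, mem_filter_univ] at hj ⊢
  rcases hj with ⟨hτ, hσ⟩ | ⟨hσ, hτ⟩
  · exact .inl ⟨lt_of_not_lt (by grind) hσ, hτ⟩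
  · exact .inr ⟨hσ, lt_of_not_lt (by grind) hτ⟩

end Position

section Layout

variable {m n : ℕ} (L : Fin n → Equiv.Perm (Fin m))

theorem crossAt_comm {i j : Fin m} {k : Fin n} : CrossAt L i j k ↔ CrossAt L j i k :=
  exists_congr fun _ => or_comm

theorem not_crossAt_self (i : Fin m) (k : Fin n) : ¬ CrossAt L i i k := by
  simp [CrossAt]

theorem crossCount_comm (i j : Fin m) : crossCount L i j = crossCount L j i := by
  simp only [crossCount, crossAt_comm L (i := i)]

theorem crossCount_self (i : Fin m) : crossCount L i i = 0 := by
  simp [crossCount, not_crossAt_self]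

theorem sum_sum_crossCount : ∑ i, ∑ j, crossCount L i j = 2 * totalCross L :=
  sum_sum_eq_two_nsmul_sum_lt univ (crossCount_comm L) (crossCount_self L)

theorem sum_card_crossAt (i : Fin m) :
    ∑ k, #{j | CrossAt L i j k} = ∑ j, crossCount L i j :=
  (sum_card_bipartiteAbove_eq_sum_card_bipartiteBelow (CrossAt L i)).symm

theorem wiggle_step_le_card_crossAt (i : Fin m) (k : Fin n) :
    (if h : (k : ℕ) + 1 < n then
      |((L ⟨(k : ℕ) + 1, h⟩ i : ℕ) : ℤ) - ((L k i : ℕ) : ℤ)| else 0)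
      ≤ #{j | CrossAt L i j k} := by
  split_ifs with h
  · simpa only [CrossAt, h, exists_true_left] using
      abs_apply_sub_apply_le_card_inversions (L k) (L ⟨k + 1, h⟩) i
  · positivity

end Layout

theorem wiggle_le_two_mul_crossings {m n : ℕ} (hm : 0 < m) (hn : 0 < n)
    (L : Fin n → Equiv.Perm (Fin m)) :
    totalWiggle L ≤ 2 * (totalCross L : ℤ) := by
  calc totalWiggle L
      ≤ ∑ k, ∑ i, (#{j | CrossAt L i j k} : ℤ) :=
        sum_le_sum fun k _ => sum_le_sum fun i _ => wiggle_step_le_card_crossAt L i k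
    _ = ∑ i, ∑ k, (#{j | CrossAt L i j k} : ℤ) := sum_comm
    _ = ∑ i, ∑ j, (crossCount L i j : ℤ) :=
        sum_congr rfl fun i _ => mod_cast sum_card_crossAt L i
    _ = 2 * (totalCross L : ℤ) := mod_cast sum_sum_crossCount L
end

section
/- Suppose all m curves of the bin assignment b have pairwise distinct bin vectors. Define i ≺ j if, at the smallest element index t where b(i,t) ≠ b(j,t), one has b(i,t) < b(j,t). Then ≺ is a strict total order on the curves, and there exists a layout Λ compatible with b achieving the minimum total crossing number over all compatible layouts whose first permutation λ_1 orders the curves according to ≺, i.e., λ_1(i) < λ_1(j) whenever i ≺ j. (This is the correctness of the look-ahead computation of the first column order in the curve-ordering algorithm.) -/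
open Finset

/-- `i` precedes `j` if at the smallest element index where their bin vectors
differ, the bin of `i` is smaller. -/
def Prec {m n : ℕ} (b : Fin m → Fin n → ℕ) (i j : Fin m) : Prop :=
  ∃ t : Fin n, b i t < b j t ∧ ∀ s : Fin n, s < t → b i s = b j s

/-!
An element separates two curves if it puts them into different bins. Whenever two consecutive
separating elements order a pair oppositely, the pair must cross between them, so the number of such
alternations bounds the crossings of the pair from below. Now sort the curves at the first element
by their whole bin vectors, and obtain each later order from the previous one by a stable sort with
respect to the remaining bins. Then a pair crosses right after element `k` only if `k` separates it
and the next separating element orders it oppositely, so all pairs attain the lower bound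
simultaneously.
-/

section StableSort

variable {m : ℕ} {α : Type*} [LinearOrder α]

theorem sort_symm_lt_sort_symm_iff {f : Fin m → α} (hf : f.Injective) {i j : Fin m} :
    (Tuple.sort f).symm i < (Tuple.sort f).symm j ↔ f i < f j := by
  have hmono : StrictMono (f ∘ Tuple.sort f) :=
    (Tuple.monotone_sort f).strictMono_of_injective (hf.comp (Tuple.sort f).injective)
  simpa using (hmono.lt_iff_lt (a := (Tuple.sort f).symm i) (b := (Tuple.sort f).symm j)).symm

/-- The positions of the items after a stable sort by the key `f` of an arrangement in which item
`i` has position `σ i`. The inverse appears because `Tuple.sort` maps positions to items. -/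
def stableSort (f : Fin m → α) (σ : Equiv.Perm (Fin m)) : Equiv.Perm (Fin m) :=
  (Tuple.sort fun i => toLex (f i, σ i)).symm

variable {f : Fin m → α} {σ : Equiv.Perm (Fin m)} {i j : Fin m}

theorem stableSort_lt_stableSort_iff :
    stableSort f σ i < stableSort f σ j ↔ f i < f j ∨ f i = f j ∧ σ i < σ j := by
  have hinj : Function.Injective fun i => toLex (f i, σ i) := fun i j h =>
    σ.injective (congrArg Prod.snd (toLex.injective h))
  exact (sort_symm_lt_sort_symm_iff hinj).trans Prod.Lex.toLex_lt_toLex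

end StableSort

section Alternations

variable {m n : ℕ} {b : Fin m → Fin n → ℕ} {L : Fin n → Equiv.Perm (Fin m)} {i j : Fin m}

theorem crossAt_iff_not_lt_iff_lt {k : Fin n} :
    CrossAt L i j k ↔
      ∃ h : (k : ℕ) + 1 < n, ¬(L k i < L k j ↔ L ⟨k + 1, h⟩ i < L ⟨k + 1, h⟩ j) := by
  obtain rfl | hij := eq_or_ne i j
  · simp [CrossAt]
  · have hne (t : Fin n) : L t i ≠ L t j := (L t).injective.ne hij
    unfold CrossAt
    grind

theorem AltPair.symm {p : Fin n × Fin n} : AltPair b i j p → AltPair b j i p :=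
  fun ⟨hlt, heq, halt⟩ => ⟨hlt, fun t h₁ h₂ => (heq t h₁ h₂).symm, halt.symm⟩

theorem lt_iff_lt_of_forall_not_crossAt {s t : Fin n} (hst : s ≤ t)
    (hcross : ∀ k, s ≤ k → k < t → ¬CrossAt L i j k) :
    L s i < L s j ↔ L t i < L t j := by
  obtain ⟨t, ht⟩ := t
  induction t, (show (s : ℕ) ≤ t from hst) using Nat.le_induction with
  | base => rfl
  | succ t hst' ih =>
    have hstep := hcross ⟨t, by omega⟩ hst' t.lt_succ_self
    rw [crossAt_iff_not_lt_iff_lt, not_exists] at hstep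
    exact (ih (by omega) hst' fun k hsk hkt => hcross k hsk (hkt.trans t.lt_succ_self)).trans
      (not_not.mp (hstep ht))

theorem AltPair.exists_crossAt {p : Fin n × Fin n} (hp : AltPair b i j p) (hL : Compatible b L) :
    ∃ k, p.1 ≤ k ∧ k < p.2 ∧ CrossAt L i j k := by
  by_contra! hcross
  have hiff := lt_iff_lt_of_forall_not_crossAt hp.1.le hcross
  obtain ⟨-, -, ⟨h₁, h₂⟩ | ⟨h₁, h₂⟩⟩ := hp
  · exact (hL _ _ _ h₂).asymm (hiff.mp (hL _ _ _ h₁))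
  · exact (hL _ _ _ h₁).asymm (hiff.mpr (hL _ _ _ h₂))

theorem AltPair.fst_ne {p : Fin n × Fin n} (hp : AltPair b i j p) : b i p.1 ≠ b j p.1 :=
  hp.2.2.elim (fun h => h.1.ne) fun h => h.1.ne'

theorem AltPair.snd_ne {p : Fin n × Fin n} (hp : AltPair b i j p) : b i p.2 ≠ b j p.2 :=
  hp.2.2.elim (fun h => h.2.ne') fun h => h.2.ne

theorem AltPair.eq_of_fst_eq {p q : Fin n × Fin n} (hp : AltPair b i j p) (hq : AltPair b i j q)
    (h : p.1 = q.1) : p = q := by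
  refine Prod.ext h (le_antisymm ?_ ?_) <;> by_contra! hlt
  · exact hq.snd_ne (hp.2.1 _ (h ▸ hq.1) hlt)
  · exact hp.snd_ne (hq.2.1 _ (h ▸ hp.1) hlt)

theorem AltPair.eq_of_mem_Ico {p q : Fin n × Fin n} (hp : AltPair b i j p) (hq : AltPair b i j q)
    {k : Fin n} (hkp : k ∈ Set.Ico p.1 p.2) (hkq : k ∈ Set.Ico q.1 q.2) : p = q := by
  refine hp.eq_of_fst_eq hq (le_antisymm ?_ ?_) <;> by_contra! hlt
  · exact hp.fst_ne (hq.2.1 _ hlt (hkp.1.trans_lt hkq.2))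
  · exact hq.fst_ne (hp.2.1 _ hlt (hkq.1.trans_lt hkp.2))

theorem altCount_le_crossCount (hL : Compatible b L) (i j : Fin m) :
    altCount b i j ≤ crossCount L i j := by
  refine card_le_card_of_forall_subsingleton (fun p k => k ∈ Set.Ico p.1 p.2) ?_ ?_
  · intro p hp
    obtain ⟨k, h₁, h₂, hk⟩ := (mem_filter.mp hp).2.exists_crossAt hL
    exact ⟨k, mem_filter.mpr ⟨mem_univ k, hk⟩, h₁, h₂⟩
  · rintro k - p ⟨hp, hkp⟩ q ⟨hq, hkq⟩
    exact (mem_filter.mp hp).2.eq_of_mem_Ico (mem_filter.mp hq).2 hkp hkq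

theorem crossCount_le_altCount (h : ∀ k, CrossAt L i j k → ∃ t, AltPair b i j (k, t)) :
    crossCount L i j ≤ altCount b i j := by
  refine card_le_card_of_forall_subsingleton (fun k p => p.1 = k) ?_ ?_
  · intro k hk
    obtain ⟨t, ht⟩ := h k (mem_filter.mp hk).2
    exact ⟨(k, t), mem_filter.mpr ⟨mem_univ _, ht⟩, rfl⟩
  · rintro p - k ⟨-, hk⟩ l ⟨-, hl⟩
    exact hk.symm.trans hl

end Alternations

section Lookahead

variable {m n : ℕ} {b : Fin m → Fin n → ℕ} {i j : Fin m}

/-- The bins of curve `i` from element `k` on, compared lexicographically. Earlier bins are masked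
by `0`, so that the keys for all `k` live in the same type. -/
def lookaheadKey (b : Fin m → Fin n → ℕ) (k : ℕ) (i : Fin m) : Lex (Fin n → ℕ) :=
  toLex fun t => if k ≤ t then b i t else 0

theorem lookaheadKey_lt_lookaheadKey_iff {k : ℕ} :
    lookaheadKey b k i < lookaheadKey b k j ↔
      ∃ t : Fin n, k ≤ t ∧ b i t < b j t ∧ ∀ s : Fin n, k ≤ s → s < t → b i s = b j s := by
  change (∃ t, (∀ s, s < t → ite _ _ _ = ite _ _ _) ∧ ite _ _ _ < ite _ _ _) ↔ _
  grind

theorem prec_iff_lookaheadKey_lt : Prec b i j ↔ lookaheadKey b 0 i < lookaheadKey b 0 j := by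
  simp [lookaheadKey_lt_lookaheadKey_iff, Prec]

theorem prec_irrefl (i : Fin m) : ¬Prec b i i :=
  prec_iff_lookaheadKey_lt.not.mpr (lt_irrefl _)

theorem Prec.trans {l : Fin m} (hij : Prec b i j) (hjl : Prec b j l) : Prec b i l := by
  rw [prec_iff_lookaheadKey_lt] at *
  exact hij.trans hjl

theorem prec_or_prec_of_ne (h : b i ≠ b j) : Prec b i j ∨ Prec b j i := by
  simp only [prec_iff_lookaheadKey_lt]
  refine lt_or_gt_of_ne fun hkey => h ?_
  simpa [lookaheadKey] using hkey

theorem lookaheadKey_lt_of_succ_lt {k : Fin n} (hk : b i k = b j k)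
    (h : lookaheadKey b (k + 1) i < lookaheadKey b (k + 1) j) :
    lookaheadKey b k i < lookaheadKey b k j := by
  obtain ⟨t, hkt, ht, heq⟩ := lookaheadKey_lt_lookaheadKey_iff.mp h
  refine lookaheadKey_lt_lookaheadKey_iff.mpr ⟨t, by omega, ht, fun s hks hst => ?_⟩
  obtain rfl | hne := eq_or_ne s k
  · exact hk
  · exact heq s (by omega) hst

/-- The curve order at each element: every order is obtained from the previous one by a stable sort
with respect to the remaining bins. The first order starts from the numbering of the curves, which
serves to break ties between equal bin vectors. -/
noncomputable def lookaheadOrder (b : Fin m → Fin n → ℕ) : ℕ → Equiv.Perm (Fin m)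
  | 0 => stableSort (lookaheadKey b 0) 1
  | k + 1 => stableSort (lookaheadKey b (k + 1)) (lookaheadOrder b k)

theorem lookaheadOrder_lt_of_key_lt {k : ℕ} (h : lookaheadKey b k i < lookaheadKey b k j) :
    lookaheadOrder b k i < lookaheadOrder b k j := by
  cases k <;> exact stableSort_lt_stableSort_iff.mpr (Or.inl h)

theorem key_lt_of_lookaheadOrder_lt_of_lt {k : ℕ}
    (h : lookaheadOrder b k i < lookaheadOrder b k j)
    (hsucc : lookaheadOrder b (k + 1) j < lookaheadOrder b (k + 1) i) :
    lookaheadKey b (k + 1) j < lookaheadKey b (k + 1) i :=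
  (stableSort_lt_stableSort_iff.mp hsucc).resolve_right fun htie => h.asymm htie.2

/-- The layout formed by the first `n` look-ahead orders. -/
noncomputable def lookaheadLayout (b : Fin m → Fin n → ℕ) (k : Fin n) : Equiv.Perm (Fin m) :=
  lookaheadOrder b k

theorem compatible_lookaheadLayout (b : Fin m → Fin n → ℕ) : Compatible b (lookaheadLayout b) :=
  fun _ _ k hlt => lookaheadOrder_lt_of_key_lt <|
    lookaheadKey_lt_lookaheadKey_iff.mpr ⟨k, le_rfl, hlt, fun _ hks hsk => absurd hsk hks.not_gt⟩

theorem exists_altPair_of_lookaheadLayout_lt_of_lt {k : Fin n} {hk : (k : ℕ) + 1 < n}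
    (hlt : lookaheadLayout b k i < lookaheadLayout b k j)
    (hswap : lookaheadLayout b ⟨k + 1, hk⟩ j < lookaheadLayout b ⟨k + 1, hk⟩ i) :
    ∃ t, AltPair b i j (k, t) := by
  have hkey : lookaheadKey b (k + 1) j < lookaheadKey b (k + 1) i :=
    key_lt_of_lookaheadOrder_lt_of_lt hlt hswap
  have hle : b i k ≤ b j k := not_lt.mp fun h => hlt.asymm (compatible_lookaheadLayout b _ _ _ h)
  have hne : b i k ≠ b j k := fun h =>
    hlt.asymm (lookaheadOrder_lt_of_key_lt (lookaheadKey_lt_of_succ_lt h.symm hkey))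
  obtain ⟨t, hkt, ht, heq⟩ := lookaheadKey_lt_lookaheadKey_iff.mp hkey
  exact ⟨t, hkt, fun s hks hst => (heq s hks hst).symm, Or.inl ⟨hle.lt_of_ne hne, ht⟩⟩

theorem exists_altPair_of_crossAt_lookaheadLayout {k : Fin n}
    (hcross : CrossAt (lookaheadLayout b) i j k) : ∃ t, AltPair b i j (k, t) := by
  obtain ⟨_, ⟨hlt, hswap⟩ | ⟨hlt, hswap⟩⟩ := hcross
  · exact exists_altPair_of_lookaheadLayout_lt_of_lt hlt hswap
  · exact (exists_altPair_of_lookaheadLayout_lt_of_lt hlt hswap).imp fun _ => AltPair.symm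

theorem totalCross_lookaheadLayout_le {L : Fin n → Equiv.Perm (Fin m)} (hL : Compatible b L) :
    totalCross (lookaheadLayout b) ≤ totalCross L :=
  sum_le_sum fun p _ =>
    (crossCount_le_altCount fun _ => exists_altPair_of_crossAt_lookaheadLayout).trans
      (altCount_le_crossCount hL p.1 p.2)

end Lookahead

theorem lookahead_first_column_order_general {m n : ℕ} (hn : 0 < n) (b : Fin m → Fin n → ℕ) :
    (∀ i : Fin m, ¬ Prec b i i) ∧
    (∀ i j l : Fin m, Prec b i j → Prec b j l → Prec b i l) ∧
    (∀ i j : Fin m, b i ≠ b j → Prec b i j ∨ Prec b j i) ∧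
    ∃ L : Fin n → Equiv.Perm (Fin m), Compatible b L ∧
      (∀ L' : Fin n → Equiv.Perm (Fin m), Compatible b L' → totalCross L ≤ totalCross L') ∧
      ∀ i j : Fin m, Prec b i j → L ⟨0, hn⟩ i < L ⟨0, hn⟩ j :=
  ⟨prec_irrefl, fun _ _ _ => Prec.trans, fun _ _ => prec_or_prec_of_ne,
    lookaheadLayout b, compatible_lookaheadLayout b, fun _ => totalCross_lookaheadLayout_le,
    fun _ _ h => lookaheadOrder_lt_of_key_lt (prec_iff_lookaheadKey_lt.mp h)⟩

theorem lookahead_first_column_order {m n : ℕ} (hm : 0 < m) (hn : 0 < n)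
    (b : Fin m → Fin n → ℕ)
    (hdist : ∀ i j : Fin m, i ≠ j → ∃ t : Fin n, b i t ≠ b j t) :
    (∀ i : Fin m, ¬ Prec b i i) ∧
    (∀ i j l : Fin m, Prec b i j → Prec b j l → Prec b i l) ∧
    (∀ i j : Fin m, i ≠ j → Prec b i j ∨ Prec b j i) ∧
    ∃ L : Fin n → Equiv.Perm (Fin m), Compatible b L ∧
      (∀ L' : Fin n → Equiv.Perm (Fin m), Compatible b L' → totalCross L ≤ totalCross L') ∧
      ∀ i j : Fin m, Prec b i j → L ⟨0, hn⟩ i < L ⟨0, hn⟩ j := by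
  obtain ⟨hirrefl, htrans, htotal, hlayout⟩ := lookahead_first_column_order_general hn b
  exact ⟨hirrefl, htrans, fun i j hij => htotal i j (Function.ne_iff.mpr (hdist i j hij)), hlayout⟩
end
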